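/- Let s and k be positive integers with k+s divisible by 3, gcd(s,3k)=1 and gcd(k,3)=1, let u be a primitive element of GF(2^{3k}), and let w be an element of the subfield GF(2^k). Then for every nonzero q in GF(2^{3k}), D := w·u^{2^k+1}·q^{2^{k+s}+2^s} + u^{2^k}·q^{2^{2k}+2^{k+s}} ≠ 0. -/

import Mathlib

/-!
Let the field have order `r ^ (3 * k)` and put `n = r ^ 2 + r + 1`; for `r = 2` this is `n = 7`.
Dividing `D = 0` by `u ^ r ^ k * q ^ r ^ (k + s)` leaves `w * u * q ^ r ^ s = -q ^ r ^ (2 * k)`,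
which makes `u` an `n`-th power, because
* `q ^ r ^ (2 * k) / q ^ r ^ s` is one: `r ^ 3 ≡ 1 [MOD n]` and `2 * k ≡ s [MOD 3]`;
* `w` is one: the nonzero elements of the subfield of order `r ^ k` are exactly the
  `(r ^ (2 * k) + r ^ k + 1)`-th powers, and `n` divides this exponent when `3 ∤ k`;
* `-1` is one: `n` is odd.

A primitive element is not an `n`-th power, as `n ≠ 1` divides `r ^ (3 * k) - 1`.
-/

section CubeRootsOfUnity

variable {R : Type*} [CommRing R] {x : R}

theorem pow_eq_pow_of_sq_add_self_add_one_eq_zero (hx : x ^ 2 + x + 1 = 0) {a b : ℕ}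
    (hab : a ≡ b [MOD 3]) : x ^ a = x ^ b :=
  pow_eq_pow_of_modEq hab (by linear_combination (x - 1) * hx)

theorem pow_two_mul_add_pow_add_one_eq_zero (hx : x ^ 2 + x + 1 = 0) {k : ℕ} (hk : ¬ 3 ∣ k) :
    x ^ (2 * k) + x ^ k + 1 = 0 := by
  have hmod : (k ≡ 1 [MOD 3] ∧ 2 * k ≡ 2 [MOD 3]) ∨ (k ≡ 2 [MOD 3] ∧ 2 * k ≡ 1 [MOD 3]) := by
    unfold Nat.ModEq
    lia
  rcases hmod with ⟨h, h2⟩ | ⟨h, h2⟩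
  · rw [pow_eq_pow_of_sq_add_self_add_one_eq_zero hx h,
      pow_eq_pow_of_sq_add_self_add_one_eq_zero hx h2, pow_one, hx]
  · rw [pow_eq_pow_of_sq_add_self_add_one_eq_zero hx h,
      pow_eq_pow_of_sq_add_self_add_one_eq_zero hx h2, pow_one, add_comm x, hx]

end CubeRootsOfUnity

section Divisibility

theorem zmod_natCast_sq_add_self_add_one_eq_zero (r : ℕ) :
    (r : ZMod (r ^ 2 + r + 1)) ^ 2 + r + 1 = 0 := by
  exact_mod_cast ZMod.natCast_self (r ^ 2 + r + 1)

theorem pow_modEq_pow_sq_add_self_add_one (r : ℕ) {a b : ℕ} (hab : a ≡ b [MOD 3]) :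
    r ^ a ≡ r ^ b [MOD r ^ 2 + r + 1] := by
  rw [← ZMod.natCast_eq_natCast_iff]
  push_cast
  exact pow_eq_pow_of_sq_add_self_add_one_eq_zero (zmod_natCast_sq_add_self_add_one_eq_zero r) hab

theorem sq_add_self_add_one_dvd_pow_two_mul_add_pow_add_one (r : ℕ) {k : ℕ} (hk : ¬ 3 ∣ k) :
    r ^ 2 + r + 1 ∣ r ^ (2 * k) + r ^ k + 1 := by
  rw [← ZMod.natCast_eq_zero_iff]
  push_cast
  exact pow_two_mul_add_pow_add_one_eq_zero (zmod_natCast_sq_add_self_add_one_eq_zero r) hk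

theorem pow_two_mul_add_pow_add_one_mul_pow_sub_one (r k : ℕ) :
    (r ^ (2 * k) + r ^ k + 1) * (r ^ k - 1) = r ^ (3 * k) - 1 := by
  rw [pow_mul', pow_mul']
  cases r ^ k with
  | zero => rfl
  | succ a =>
    rw [Nat.add_sub_cancel]
    exact Nat.eq_sub_of_add_eq (by ring)

theorem sq_add_self_add_one_dvd_pow_three_mul_sub_one (r k : ℕ) :
    r ^ 2 + r + 1 ∣ r ^ (3 * k) - 1 := by
  have h : 3 * k ≡ 0 [MOD 3] := Nat.mul_mod_right 3 k
  exact (pow_modEq_pow_sq_add_self_add_one r h).symm.dvd'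

theorem odd_sq_add_self_add_one (r : ℕ) : Odd (r ^ 2 + r + 1) := by
  rw [sq, ← Nat.mul_add_one]
  exact (Nat.even_mul_succ_self r).add_one

end Divisibility

section PowerSubgroup

variable {G : Type*} [CommGroup G]

theorem pow_div_pow_mem_range_powMonoidHom {n a b : ℕ} (hab : a ≡ b [MOD n]) (g : G) :
    g ^ a / g ^ b ∈ (powMonoidHom n : G →* G).range := by
  obtain ⟨t, ht⟩ := Nat.modEq_iff_dvd.1 hab.symm
  refine ⟨g ^ t, ?_⟩
  rw [powMonoidHom_apply, ← zpow_natCast, ← zpow_mul', ← ht, zpow_sub, zpow_natCast, zpow_natCast,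
    div_eq_mul_inv]

theorem range_powMonoidHom_le_of_dvd {m n : ℕ} (hnm : n ∣ m) :
    (powMonoidHom m : G →* G).range ≤ (powMonoidHom n).range := by
  obtain ⟨c, rfl⟩ := hnm
  rintro _ ⟨g, rfl⟩
  exact ⟨g ^ c, (pow_mul' g n c).symm⟩

theorem range_powMonoidHom_eq_ker_powMonoidHom [IsCyclic G] [Finite G] {m n : ℕ}
    (hmn : m * n = Nat.card G) :
    (powMonoidHom m : G →* G).range = (powMonoidHom n).ker := by
  have hm : 0 < m := Nat.pos_of_mul_pos_right (hmn ▸ Nat.card_pos)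
  refine Subgroup.eq_of_le_of_card_ge ?_ (le_of_eq ?_)
  · rintro _ ⟨g, rfl⟩
    rw [MonoidHom.mem_ker, powMonoidHom_apply, powMonoidHom_apply, ← pow_mul, hmn, pow_card_eq_one']
  · rw [IsCyclic.card_powMonoidHom_ker, IsCyclic.card_powMonoidHom_range, ← hmn,
      Nat.gcd_mul_left_left, Nat.gcd_mul_right_left, Nat.mul_div_cancel_left n hm]

end PowerSubgroup

section FiniteField

variable {K : Type*} [Field K] [Finite K]

theorem pow_ne_of_forall_exists_eq_pow {u : K} (hu : ∀ x : K, x ≠ 0 → ∃ m : ℕ, x = u ^ m) {n : ℕ}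
    (hn : n ∣ Nat.card K - 1) (hn_one : n ≠ 1) (v : K) : v ^ n ≠ u := by
  rintro rfl
  rw [← Nat.card_units] at hn
  have hn_zero : n ≠ 0 := ne_zero_of_dvd_ne_zero Nat.card_pos.ne' hn
  have hsurj : (powMonoidHom n : Kˣ →* Kˣ).range = ⊤ := by
    refine (Subgroup.eq_top_iff' _).2 fun x => ?_
    obtain ⟨m, hm⟩ := hu x x.ne_zero
    rw [pow_right_comm] at hm
    have hvm : v ^ m ≠ 0 := fun h => x.ne_zero (by rw [hm, h, zero_pow hn_zero])
    exact ⟨Units.mk0 (v ^ m) hvm, Units.ext hm.symm⟩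
  apply hn_one
  rw [← Nat.gcd_eq_right hn, ← IsCyclic.index_powMonoidHom_range, hsurj, Subgroup.index_top]

theorem mem_range_powMonoidHom_of_pow_eq_self {r k : ℕ} (hcard : Nat.card K = r ^ (3 * k))
    (hk : ¬ 3 ∣ k) {w : Kˣ} (hw : w ^ r ^ k = w) :
    w ∈ (powMonoidHom (r ^ 2 + r + 1) : Kˣ →* Kˣ).range := by
  have hcard_units : (r ^ (2 * k) + r ^ k + 1) * (r ^ k - 1) = Nat.card Kˣ := by
    rw [Nat.card_units, hcard, pow_two_mul_add_pow_add_one_mul_pow_sub_one]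
  have hr : r ^ k ≠ 0 := by
    refine fun h => (Nat.card_pos (α := K)).ne' ?_
    rw [hcard, pow_mul', h, zero_pow three_ne_zero]
  have hw_ker : w ∈ (powMonoidHom (r ^ k - 1) : Kˣ →* Kˣ).ker := by
    rw [MonoidHom.mem_ker, powMonoidHom_apply, ← mul_eq_right (b := w), pow_sub_one_mul hr, hw]
  apply range_powMonoidHom_le_of_dvd (sq_add_self_add_one_dvd_pow_two_mul_add_pow_add_one r hk)
  rwa [range_powMonoidHom_eq_ker_powMonoidHom hcard_units]

theorem mem_range_powMonoidHom_of_mul_eq_neg {r k s : ℕ} (hcard : Nat.card K = r ^ (3 * k))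
    (hks : 3 ∣ k + s) (hk : ¬ 3 ∣ k) {u w q : Kˣ} (hw : w ^ r ^ k = w)
    (h : w * u * q ^ r ^ s = -q ^ r ^ (2 * k)) :
    u ∈ (powMonoidHom (r ^ 2 + r + 1) : Kˣ →* Kˣ).range := by
  have hmod : 2 * k ≡ s [MOD 3] := by
    unfold Nat.ModEq
    lia
  have hneg_one : (-1 : Kˣ) ∈ (powMonoidHom (r ^ 2 + r + 1) : Kˣ →* Kˣ).range :=
    ⟨-1, (odd_sq_add_self_add_one r).neg_one_pow⟩
  have hq := pow_div_pow_mem_range_powMonoidHom (pow_modEq_pow_sq_add_self_add_one r hmod) q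
  have hu : u = -1 * (q ^ r ^ (2 * k) / q ^ r ^ s) / w := by
    rw [eq_div_iff_mul_eq', ← mul_div_assoc, eq_div_iff_mul_eq', neg_one_mul, ← h, mul_comm u]
  rw [hu]
  exact div_mem (mul_mem hneg_one hq) (mem_range_powMonoidHom_of_pow_eq_self hcard hk hw)

theorem coefficient_D_ne_zero_general {r k s : ℕ} (hcard : Nat.card K = r ^ (3 * k))
    (hks : 3 ∣ k + s) (hk : ¬ 3 ∣ k) {u w q : K} (hu : ∀ v : K, v ^ (r ^ 2 + r + 1) ≠ u)
    (hw : w ^ r ^ k = w) (hq : q ≠ 0) :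
    w * u ^ (r ^ k + 1) * q ^ (r ^ (k + s) + r ^ s)
      + u ^ r ^ k * q ^ (r ^ (2 * k) + r ^ (k + s)) ≠ 0 := by
  intro hD
  have hu0 : u ≠ 0 := fun h => hu 0 (by rw [h, zero_pow (Nat.succ_ne_zero _)])
  have hcancel : w * u * q ^ r ^ s = -q ^ r ^ (2 * k) := by
    have hne : u ^ r ^ k * q ^ r ^ (k + s) ≠ 0 := mul_ne_zero (pow_ne_zero _ hu0) (pow_ne_zero _ hq)
    exact mul_left_cancel₀ hne (by linear_combination hD)
  have hw0 : w ≠ 0 := by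
    rintro rfl
    rw [zero_mul, zero_mul, zero_eq_neg] at hcancel
    exact pow_ne_zero _ hq hcancel
  lift u to Kˣ using hu0.isUnit
  lift w to Kˣ using hw0.isUnit
  lift q to Kˣ using hq.isUnit
  obtain ⟨v, hv⟩ :=
    mem_range_powMonoidHom_of_mul_eq_neg hcard hks hk (mod_cast hw) (mod_cast hcancel)
  exact hu v (mod_cast hv)

end FiniteField

/-- The coefficient `D = w u^{2^k+1} q^{2^{k+s}+2^s} + u^{2^k} q^{2^{2k}+2^{k+s}}`
never vanishes for nonzero `q`. -/
theorem coefficient_D_ne_zero (s k : ℕ) (hs : 0 < s) (hk : 0 < k)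
    (h3 : 3 ∣ (k + s)) (hsk : Nat.gcd s (3 * k) = 1) (hk3 : Nat.gcd k 3 = 1)
    (u w : GaloisField 2 (3 * k))
    (hu : ∀ x : GaloisField 2 (3 * k), x ≠ 0 → ∃ m : ℕ, x = u ^ m)
    (hw : w ^ (2 ^ k) = w) :
    ∀ q : GaloisField 2 (3 * k), q ≠ 0 →
      w * u ^ (2 ^ k + 1) * q ^ (2 ^ (k + s) + 2 ^ s)
        + u ^ (2 ^ k) * q ^ (2 ^ (2 * k) + 2 ^ (k + s)) ≠ 0 := by
  have hk_dvd : ¬ 3 ∣ k := Nat.prime_three.coprime_iff_not_dvd.1 (Nat.Coprime.symm hk3)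
  have hcard := GaloisField.card 2 (3 * k) (by lia)
  have hdvd := sq_add_self_add_one_dvd_pow_three_mul_sub_one 2 k
  exact fun q => coefficient_D_ne_zero_general hcard h3 hk_dvd
    (pow_ne_of_forall_exists_eq_pow hu (hcard ▸ hdvd) (by decide)) hw
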